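/- Let φ(x,t) = t^p + a(x) t^q with 1 < p < q < ∞, a a nonnegative function in C^{0,α}(ℝⁿ) for some α ∈ (0,1], and assume q/p ≤ 1 + α/n. Let Ω ⊆ ℝⁿ be open and 0 < r_o ≤ 1. Suppose there is c₀ > 0 such that for every z ∈ Ω with r_z := dist(z,∂Ω) < r_o, every y ∈ ℝⁿ, R > 0 and u ∈ Lip_0(Ω), the pointwise Hardy inequality holds with the infimum coefficient: φ^-_{y,R}(|u(z)|) ≤ c₀ · (1 + a^-_{y,R} · (M_{2r_z}(|r_z ∇u|^p)(z))^{(q−p)/p}) · M_{2r_z}(|r_z ∇u|^p)(z), where φ^-_{y,R}(t) = t^p + a^-_{y,R} t^q. Then ℝⁿ∖Ω is locally uniformly infimally φ-fat with radius r_o and some constant c_fat = c_fat(n,p,q,c₀) > 0. -/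

import Mathlib

open MeasureTheory Metric Set

noncomputable section

/-- Euclidean space `ℝⁿ`. -/
abbrev En (n : ℕ) : Type := EuclideanSpace ℝ (Fin n)

/-- Norm of the (a.e. defined, by Rademacher's theorem) gradient of `u` at `x`. -/
def gnorm {n : ℕ} (u : En n → ℝ) (x : En n) : ℝ := ‖fderiv ℝ u x‖

/-- Admissible test functions for the level-`t` capacity of `E` in `O`:
Lipschitz on the closure of `O`, `u ≥ t` on `E`, `u = 0` on `∂O`. -/
def Adm {n : ℕ} (E O : Set (En n)) (t : ℝ) : Set (En n → ℝ) :=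
  {u | (∃ K, LipschitzOnWith K u (closure O)) ∧ (∀ x ∈ E, t ≤ u x) ∧
    ∀ x ∈ frontier O, u x = 0}

/-- Level-`t` variational capacity with integrand `ψ` and normalization `ψm`. -/
def capLevel {n : ℕ} (ψ : En n → ℝ → ℝ) (ψm : ℝ → ℝ)
    (E O : Set (En n)) (t : ℝ) : ℝ :=
  sInf ((fun u => ∫ x in O, ψ x (gnorm u x) / ψm t) '' Adm E O t)

/-- Infimal capacity with integrand `ψ` and normalization `ψm`. -/
def capInfGen {n : ℕ} (ψ : En n → ℝ → ℝ) (ψm : ℝ → ℝ) (E O : Set (En n)) : ℝ :=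
  ⨅ t : Ioi (0 : ℝ), capLevel ψ ψm E O (t : ℝ)

/-- The double-phase integrand `φ(x,t) = t^p + a(x) t^q`. -/
def phi {n : ℕ} (a : En n → ℝ) (p q : ℝ) (x : En n) (t : ℝ) : ℝ :=
  t ^ p + a x * t ^ q

/-- `a_O^- = inf_{x ∈ O} a(x)`. -/
def aInfOn {n : ℕ} (a : En n → ℝ) (O : Set (En n)) : ℝ := sInf (a '' O)

/-- `a_O^+ = sup_{x ∈ O} a(x)`. -/
def aSupOn {n : ℕ} (a : En n → ℝ) (O : Set (En n)) : ℝ := sSup (a '' O)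

/-- `φ_O^-(t) = t^p + a_O^- t^q`. -/
def phiMinus {n : ℕ} (a : En n → ℝ) (p q : ℝ) (O : Set (En n)) (t : ℝ) : ℝ :=
  t ^ p + aInfOn a O * t ^ q

/-- Level-`t` variational capacity for the double-phase integrand. -/
def capPhiLevel {n : ℕ} (a : En n → ℝ) (p q t : ℝ) (E O : Set (En n)) : ℝ :=
  capLevel (phi a p q) (phiMinus a p q O) E O t

/-- Infimal `φ`-capacity. -/
def capPhiInf {n : ℕ} (a : En n → ℝ) (p q : ℝ) (E O : Set (En n)) : ℝ :=
  ⨅ t : Ioi (0 : ℝ), capPhiLevel a p q (t : ℝ) E O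

/-- Variational `p`-capacity. -/
def capP {n : ℕ} (p : ℝ) (E O : Set (En n)) : ℝ :=
  sInf ((fun u => ∫ x in O, gnorm u x ^ p) '' Adm E O 1)

/-- The rescaled set `{x ∈ B̄(0,1/2) : z + r x ∈ E}`. -/
def shiftedSet {n : ℕ} (E : Set (En n)) (z : En n) (r : ℝ) : Set (En n) :=
  {x ∈ closedBall (0 : En n) (1 / 2) | z + r • x ∈ E}

/-- Local uniform infimal `φ`-fatness with parameters `cfat` and `ro`. -/
def LocUnifPhiFat {n : ℕ} (a : En n → ℝ) (p q : ℝ) (E : Set (En n))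
    (cfat ro : ℝ) : Prop :=
  ∀ z ∈ E, ∀ r : ℝ, 0 < r → r < ro →
    cfat ≤ capPhiInf (fun x => a (z + r • x)) p q (shiftedSet E z r) (ball (0 : En n) 1)

/-- Local uniform `p`-fatness with parameters `cfat` and `ro`. -/
def LocUnifPFat {n : ℕ} (p : ℝ) (E : Set (En n)) (cfat ro : ℝ) : Prop :=
  ∀ z ∈ E, ∀ r : ℝ, 0 < r → r < ro →
    cfat ≤ capP p (shiftedSet E z r) (ball (0 : En n) 1)

/-- `Lip_0(Ω)`: Lipschitz functions with compact support contained in `Ω`,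
extended by zero to `ℝⁿ`. -/
def Lip0 {n : ℕ} (Ω : Set (En n)) : Set (En n → ℝ) :=
  {u | (∃ K, LipschitzWith K u) ∧ HasCompactSupport u ∧ tsupport u ⊆ Ω}

/-- Restricted centered maximal operator `M_R f(x) = sup_{0<r<R} ⨍_{B(x,r)} |f|`. -/
def maxOp {n : ℕ} (R : ℝ) (f : En n → ℝ) (x : En n) : ℝ :=
  ⨆ r : Ioo (0 : ℝ) R, ⨍ y in ball x (r : ℝ), |f y|

/-! Dropping the coefficient, the double-phase Hardy inequality contains the pointwise `p`-Hardy
inequality with constant `max c₀ 1`: if `M < |u|^p` for the maximal function `M`, then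
`M^((q - p) / p) |u|^p ≤ |u|^q` and the factor `1 + a⁻ M^((q - p) / p)` cancels; otherwise the bound
is trivial.

For `p`-fatness, rescale to the unit ball around `z ∉ Ω` and let `w ≥ 0` be admissible, with
support in the unit ball. On a fixed part of the ball of radius `1 / 8`, either `w ≥ 1 / 2`, and
Poincaré's inequality bounds the energy of `w` from below, or `w < 1 / 2`. There Hardy's inequality,
applied to a cutoff of `3 / 4 - w`, makes the maximal function of `|∇w|^p` bounded below (the cutoff
lives where `w ≤ 3 / 4`, hence inside the rescaled `Ω`, and the radii are small because `z ∉ Ω` is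
near), so that the weak-type maximal inequality bounds the energy.

At level `t`, with `u = t v`, the normalized `φ`-energy of `u` dominates a weighted mean of the
`p`- and `q`-energies of `v`, and by Jensen's inequality the latter is controlled by the former. -/

section Frontier

variable {E F : Type*} [NormedAddCommGroup E] [NormedSpace ℝ E]

lemma exists_mem_frontier_dist_le {S : Set E} {x y : E} (hx : x ∈ S) (hy : y ∉ S) :
    ∃ s ∈ frontier S, dist x s ≤ dist x y := by
  have : PreconnectedSpace (segment ℝ x y) :=
    isPreconnected_iff_preconnectedSpace.1 (convex_segment x y).isPreconnected
  obtain ⟨s, hs⟩ : (frontier (((↑) : segment ℝ x y → E) ⁻¹' S)).Nonempty :=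
    nonempty_frontier_iff.2 ⟨⟨⟨x, left_mem_segment ℝ x y⟩, hx⟩,
      fun h => hy (eq_univ_iff_forall.1 h ⟨y, right_mem_segment ℝ x y⟩)⟩
  refine ⟨s, continuous_subtype_val.frontier_preimage_subset S hs, ?_⟩
  rw [← dist_add_dist_of_mem_segment s.2]
  exact le_add_of_nonneg_right dist_nonneg

lemma lipschitzWith_indicator_of_frontier [SeminormedAddCommGroup F] {S : Set E} {f : E → F}
    {K : NNReal} (hf : LipschitzOnWith K f (closure S)) (h0 : ∀ x ∈ frontier S, f x = 0) :
    LipschitzWith K (S.indicator f) := by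
  have norm_le : ∀ x y, x ∈ S → y ∉ S → ‖f x‖ ≤ K * dist x y := fun x y hx hy => by
    obtain ⟨s, hs, hxs⟩ := exists_mem_frontier_dist_le hx hy
    have hfx := hf.dist_le_mul x (subset_closure hx) s (frontier_subset_closure hs)
    rw [h0 s hs, dist_zero_right] at hfx
    exact hfx.trans (by gcongr)
  refine LipschitzWith.of_dist_le_mul fun x y => ?_
  by_cases hx : x ∈ S <;> by_cases hy : y ∈ S
  · rw [indicator_of_mem hx, indicator_of_mem hy]
    exact hf.dist_le_mul x (subset_closure hx) y (subset_closure hy)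
  · rw [indicator_of_mem hx, indicator_of_notMem hy, dist_zero_right]
    exact norm_le x y hx hy
  · rw [indicator_of_notMem hx, indicator_of_mem hy, dist_zero_left, dist_comm]
    exact norm_le y x hy hx
  · rw [indicator_of_notMem hx, indicator_of_notMem hy, dist_self]
    positivity

end Frontier

section Calculus

variable {E F G : Type*} [NormedAddCommGroup E] [NormedSpace ℝ E] [NormedAddCommGroup F]
  [NormedSpace ℝ F] [NormedAddCommGroup G] [NormedSpace ℝ G]

lemma norm_fderiv_comp_le {g : F → G} {f : E → F} {k : NNReal} {x : E} (hg : LipschitzWith k g)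
    (hf : DifferentiableAt ℝ f x) : ‖fderiv ℝ (g ∘ f) x‖ ≤ k * ‖fderiv ℝ f x‖ := by
  by_cases hgf : DifferentiableAt ℝ (g ∘ f) x
  · refine ContinuousLinearMap.opNorm_le_bound _ (by positivity) fun v => ?_
    rw [mul_assoc]
    refine (le_of_tendsto_of_tendsto' (hgf.hasFDerivAt.lim_real v).norm
      ((hf.hasFDerivAt.lim_real v).norm.const_mul (k : ℝ)) fun c => ?_).trans
      (by gcongr; exact (fderiv ℝ f x).le_opNorm v)
    rw [norm_smul, norm_smul, mul_left_comm]
    gcongr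
    exact hg.norm_sub_le _ _
  · rw [fderiv_zero_of_not_differentiableAt hgf, norm_zero]
    positivity

lemma norm_fderiv_comp_smul_sub (f : E → F) (c : ℝ) (z x : E) :
    ‖fderiv ℝ (fun y => f (c • (y - z))) x‖ = |c| * ‖fderiv ℝ f (c • (x - z))‖ := by
  rw [fderiv_comp_sub (f := fun y => f (c • y)) z, fderiv_comp_smul, norm_smul, Real.norm_eq_abs]

lemma fderiv_eq_zero_of_nonneg {f : E → ℝ} (hf : 0 ≤ f) {x : E} (hx : f x = 0) :
    fderiv ℝ f x = 0 :=
  IsLocalMin.fderiv_eq_zero (Filter.Eventually.of_forall fun y => hx.trans_le (hf y))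

end Calculus

lemma rpow_setAverage_le_setAverage_rpow {X : Type*} [MeasurableSpace X] {μ : Measure X}
    {s : Set X} {f : X → ℝ} {p : ℝ} (hp : 1 ≤ p) (hs0 : μ s ≠ 0) (hs : μ s ≠ ⊤) (hf : 0 ≤ f)
    (hfi : IntegrableOn f s μ) (hfp : IntegrableOn (fun x => f x ^ p) s μ) :
    (⨍ x in s, f x ∂μ) ^ p ≤ ⨍ x in s, f x ^ p ∂μ :=
  (convexOn_rpow hp).map_set_average_le
    (continuousOn_id.rpow_const fun _ _ => Or.inr (zero_le_one.trans hp)) isClosed_Ici hs0 hs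
    (ae_of_all _ hf) hfi hfp

section LipschitzGradient

variable {E F : Type*} [NormedAddCommGroup E] [NormedSpace ℝ E] [MeasurableSpace E] [BorelSpace E]
  [NormedAddCommGroup F] [NormedSpace ℝ F] [CompleteSpace F]

lemma integrableOn_norm_fderiv_rpow {μ : Measure E} {u : E → F} {K : NNReal} {O : Set E} {e : ℝ}
    (hu : LipschitzOnWith K u O) (hO : IsOpen O) (hμO : μ O ≠ ⊤) (he : 0 ≤ e) :
    IntegrableOn (fun x => ‖fderiv ℝ u x‖ ^ e) O μ := by
  refine Measure.integrableOn_of_bounded (M := (K : ℝ) ^ e) hμO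
    ((measurable_fderiv ℝ u).norm.pow_const e).aestronglyMeasurable ?_
  filter_upwards [ae_restrict_mem hO.measurableSet] with x hx
  rw [Real.norm_of_nonneg (by positivity)]
  gcongr
  exact norm_fderiv_le_of_lipschitzOn ℝ (hO.mem_nhds hx) hu

lemma integrable_norm_fderiv_rpow [ProperSpace E] {μ : Measure E} [IsFiniteMeasureOnCompacts μ]
    {u : E → F} {K : NNReal} {e : ℝ} (hu : LipschitzWith K u) (hc : HasCompactSupport u)
    (he : 0 < e) : Integrable (fun x => ‖fderiv ℝ u x‖ ^ e) μ := by
  obtain ⟨R, hR⟩ := hc.isCompact.isBounded.subset_ball 0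
  refine (integrableOn_iff_integrable_of_support_subset fun x hx => hR ?_).1
    (integrableOn_norm_fderiv_rpow hu.lipschitzOnWith isOpen_ball measure_ball_lt_top.ne he.le)
  by_contra hxu
  exact hx (by simp only [fderiv_of_notMem_tsupport ℝ hxu, norm_zero, Real.zero_rpow he.ne'])

end LipschitzGradient

section HaarMeasure

open Module

variable {E F : Type*} [NormedAddCommGroup E] [NormedSpace ℝ E] [MeasurableSpace E] [BorelSpace E]
  [FiniteDimensional ℝ E] [NormedAddCommGroup F] [NormedSpace ℝ F]
  (μ : Measure E) [μ.IsAddHaarMeasure]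

lemma setIntegral_ball_comp_inv_smul_sub (f : E → F) (z x : E) {r : ℝ} (hr : 0 < r) (s : ℝ) :
    ∫ y in ball (z + r • x) s, f (r⁻¹ • (y - z)) ∂μ =
      r ^ finrank ℝ E • ∫ y in ball x (s / r), f y ∂μ := by
  have mem_ball_iff : ∀ y, y ∈ ball (z + r • x) s ↔ r⁻¹ • (y - z) ∈ ball x (s / r) := fun y => by
    have : r⁻¹ • (y - z) - x = r⁻¹ • (y - (z + r • x)) := by
      rw [← sub_sub, smul_sub _ (y - z), inv_smul_smul₀ hr.ne']
    rw [mem_ball_iff_norm, mem_ball_iff_norm, this, norm_smul, norm_inv,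
      Real.norm_of_nonneg hr.le, inv_mul_lt_iff₀ hr, mul_div_cancel₀ _ hr.ne']
  have indicator_eq : (ball (z + r • x) s).indicator (fun y => f (r⁻¹ • (y - z))) =
      fun y => (ball x (s / r)).indicator f (r⁻¹ • (y - z)) :=
    funext fun y => by classical simp only [indicator_apply, mem_ball_iff]
  rw [← integral_indicator measurableSet_ball, ← integral_indicator measurableSet_ball,
    indicator_eq, integral_sub_right_eq_self (fun y => (ball x (s / r)).indicator f (r⁻¹ • y)),
    Measure.integral_comp_inv_smul_of_nonneg μ _ hr.le]

lemma setAverage_ball_comp_inv_smul_sub (f : E → F) (z x : E) {r : ℝ} (hr : 0 < r) (s : ℝ) :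
    ⨍ y in ball (z + r • x) s, f (r⁻¹ • (y - z)) ∂μ = ⨍ y in ball x (s / r), f y ∂μ := by
  have hμ := setIntegral_ball_comp_inv_smul_sub μ (fun _ => (1 : ℝ)) z x hr s
  rw [setIntegral_const, setIntegral_const, smul_eq_mul, smul_eq_mul, smul_eq_mul, mul_one,
    mul_one] at hμ
  rw [setAverage_eq, setAverage_eq, setIntegral_ball_comp_inv_smul_sub μ f z x hr, hμ, smul_smul,
    mul_inv_rev, inv_mul_cancel_right₀ (pow_ne_zero _ hr.ne')]

lemma measure_le_of_forall_measure_ball_le {ν : Measure E} {A : Set E} {s : E → ℝ} {R : ℝ}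
    {c : ENNReal} (hs : ∀ x ∈ A, s x ∈ Ioc 0 R)
    (h : ∀ x ∈ A, μ (ball x (s x)) ≤ c * ν (ball x (s x))) :
    μ A ≤ ENNReal.ofReal (5 ^ finrank ℝ E) * c * ν univ := by
  obtain ⟨t, htA, hdisj, hcov⟩ := Vitali.exists_disjoint_subfamily_covering_enlargement_closedBall
    A id s R (fun x hx => (hs x hx).2) 5 (by norm_num)
  have htc : t.Countable := hdisj.countable_of_nonempty_interior fun x hx =>
    ⟨x, ball_subset_interior_closedBall (mem_ball_self (hs x (htA hx)).1)⟩
  have hdisj_ball : t.PairwiseDisjoint fun b => ball b (s b) :=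
    hdisj.mono_on fun _ _ => ball_subset_closedBall
  have hsub : A ⊆ ⋃ b ∈ t, closedBall b (5 * s b) := fun x hx => by
    obtain ⟨b, hb, hxb⟩ := hcov x hx
    exact mem_biUnion hb (hxb (mem_closedBall_self (hs x hx).1.le))
  calc μ A ≤ ∑' b : t, μ (closedBall (b : E) (5 * s b)) :=
        (measure_mono hsub).trans (measure_biUnion_le _ htc _)
    _ ≤ ∑' b : t, ENNReal.ofReal (5 ^ finrank ℝ E) * c * ν (ball (b : E) (s b)) := by
        refine ENNReal.tsum_le_tsum fun b => ?_
        have hb := (hs b (htA b.2)).1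
        rw [Measure.addHaar_closedBall_mul μ _ (by norm_num) hb.le,
          Measure.addHaar_closedBall μ _ hb.le, ← Measure.addHaar_ball_of_pos μ b hb, mul_assoc]
        gcongr
        exact h b (htA b.2)
    _ = ENNReal.ofReal (5 ^ finrank ℝ E) * c * ν (⋃ b ∈ t, ball b (s b)) := by
        rw [ENNReal.tsum_mul_left,
          measure_biUnion htc hdisj_ball fun _ _ => measurableSet_ball]
    _ ≤ ENNReal.ofReal (5 ^ finrank ℝ E) * c * ν univ := by
        gcongr
        exact subset_univ _

lemma mul_measureReal_le_integral_of_lt_setAverage {f : E → ℝ} (hf : 0 ≤ f)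
    (hfi : Integrable f μ) {t R : ℝ} (ht : 0 < t) {A : Set E}
    (hA : ∀ x ∈ A, ∃ s ∈ Ioc 0 R, t < ⨍ y in ball x s, f y ∂μ) :
    t * μ.real A ≤ 5 ^ finrank ℝ E * ∫ y, f y ∂μ := by
  choose! s hs hlt using hA
  have withDensity_eq : ∀ S, MeasurableSet S →
      μ.withDensity (fun y => ENNReal.ofReal (f y)) S = ENNReal.ofReal (∫ y in S, f y ∂μ) :=
    fun S hS => by
      rw [withDensity_apply _ hS,
        ofReal_integral_eq_lintegral_ofReal hfi.integrableOn (ae_of_all _ hf)]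
  have hμA := measure_le_of_forall_measure_ball_le μ
    (ν := μ.withDensity fun y => ENNReal.ofReal (f y)) (c := ENNReal.ofReal t⁻¹) hs fun x hx => by
      rw [withDensity_eq _ measurableSet_ball, ← ENNReal.ofReal_mul (by positivity),
        ← ofReal_measureReal measure_ball_lt_top.ne,
        ← measure_smul_setAverage f measure_ball_lt_top.ne, smul_eq_mul]
      refine ENNReal.ofReal_le_ofReal ?_
      rw [le_inv_mul_iff₀ ht, mul_comm]
      exact mul_le_mul_of_nonneg_left (hlt x hx).le measureReal_nonneg
  rw [withDensity_eq _ MeasurableSet.univ, setIntegral_univ, ← ENNReal.ofReal_mul (by positivity),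
    ← ENNReal.ofReal_mul (by positivity)] at hμA
  have hI : 0 ≤ ∫ y, f y ∂μ := integral_nonneg hf
  rw [← le_inv_mul_iff₀ ht]
  exact (ENNReal.toReal_le_of_le_ofReal (by positivity) hμA).trans_eq (by ring)

lemma integral_le_mul_integral_norm_fderiv [Nontrivial E] {U : E → ℝ} {K : NNReal}
    (hU : LipschitzWith K U) {z : E} {r : ℝ} (hr : Function.support U ⊆ closedBall z r) :
    ∫ x, U x ∂μ ≤ r * ∫ x, ‖fderiv ℝ U x‖ ∂μ := by
  have htr : tsupport U ⊆ closedBall z r := closure_minimal hr isClosed_closedBall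
  have hc : HasCompactSupport U := (isCompact_closedBall z r).of_isClosed_subset
    (isClosed_tsupport U) htr
  obtain ⟨e, he⟩ := exists_norm_eq E zero_le_one
  obtain ⟨ℓ, hℓ, hℓe⟩ := exists_dual_vector' ℝ e
  have hℓz : ∀ x, HasFDerivAt (fun x => ℓ (x - z)) ℓ x := fun x =>
    ℓ.hasFDerivAt.comp x ((hasFDerivAt_id x).sub_const z)
  have lineDeriv_ℓz : ∀ x, lineDeriv ℝ (fun x => ℓ (x - z)) x e = 1 := fun x => by
    rw [(hℓz x).differentiableAt.lineDeriv_eq_fderiv, (hℓz x).fderiv, hℓe, he, RCLike.ofReal_one]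
  -- `∂ₑ ℓ = 1`, so `∫ U` is minus the integral of `ℓ ∂ₑ U`, where `|ℓ| ≤ r` on the support.
  have by_parts := (ℓ.lipschitz.comp (LipschitzWith.id.sub (LipschitzWith.const z)))
    |>.integral_lineDeriv_mul_eq hU hc e (μ := μ)
  simp only [Function.comp_def, id_def, lineDeriv_ℓz, one_mul] at by_parts
  have hint : Integrable (fun x => ‖fderiv ℝ U x‖) μ := by
    simpa only [Real.rpow_one] using integrable_norm_fderiv_rpow (μ := μ) hU hc one_pos
  rw [by_parts, ← integral_const_mul]
  refine (Real.le_norm_self _).trans (norm_integral_le_of_norm_le (hint.const_mul r) ?_)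
  filter_upwards [hU.ae_differentiableAt] with x hx
  by_cases hxU : x ∈ tsupport U
  · have hℓx : ‖ℓ (x - z)‖ ≤ r := by
      simpa only [hℓ, one_mul] using (ℓ.le_opNorm _).trans
        (mul_le_mul_of_nonneg_left (mem_closedBall_iff_norm.1 (htr hxU)) (norm_nonneg ℓ))
    have hDU : ‖fderiv ℝ U x (-e)‖ ≤ ‖fderiv ℝ U x‖ := by
      simpa only [norm_neg, he, mul_one] using (fderiv ℝ U x).le_opNorm (-e)
    rw [norm_mul, hx.lineDeriv_eq_fderiv, mul_comm]
    exact mul_le_mul hℓx hDU (norm_nonneg _) ((norm_nonneg _).trans hℓx)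
  · rw [hx.lineDeriv_eq_fderiv, fderiv_of_notMem_tsupport ℝ hxU]
    simp only [zero_apply, zero_mul, norm_zero, mul_zero, le_refl]

lemma setAverage_rpow_le_mul_setAverage_norm_fderiv_rpow [Nontrivial E] {U : E → ℝ} {K : NNReal}
    (hU : LipschitzWith K U) (hU0 : 0 ≤ U) {z : E} {r : ℝ} (hr : 0 < r)
    (hs : Function.support U ⊆ ball z r) {p : ℝ} (hp : 1 ≤ p) :
    (⨍ x in ball z r, U x ∂μ) ^ p ≤ r ^ p * ⨍ x in ball z r, ‖fderiv ℝ U x‖ ^ p ∂μ := by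
  have hμ0 : μ (ball z r) ≠ 0 := (measure_ball_pos μ z hr).ne'
  have hμ : μ (ball z r) ≠ ⊤ := measure_ball_lt_top.ne
  have integrableOn : ∀ {e : ℝ}, 0 ≤ e → IntegrableOn (fun x => ‖fderiv ℝ U x‖ ^ e) (ball z r) μ :=
    integrableOn_norm_fderiv_rpow hU.lipschitzOnWith isOpen_ball hμ
  have hU_zero : ∀ x ∉ ball z r, U x = 0 := fun x hx => Function.notMem_support.1 fun h => hx (hs h)
  have hDU_zero : ∀ x ∉ ball z r, ‖fderiv ℝ U x‖ = 0 := fun x hx => by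
    rw [fderiv_eq_zero_of_nonneg hU0 (hU_zero x hx), norm_zero]
  have poincare : ⨍ x in ball z r, U x ∂μ ≤ r * ⨍ x in ball z r, ‖fderiv ℝ U x‖ ∂μ := by
    rw [setAverage_eq, setAverage_eq, setIntegral_eq_integral_of_forall_compl_eq_zero hU_zero,
      setIntegral_eq_integral_of_forall_compl_eq_zero hDU_zero, smul_eq_mul, smul_eq_mul,
      mul_left_comm]
    gcongr
    exact integral_le_mul_integral_norm_fderiv μ hU (hs.trans ball_subset_closedBall)
  have hDU_nonneg : 0 ≤ ⨍ x in ball z r, ‖fderiv ℝ U x‖ ∂μ := integral_nonneg fun _ => norm_nonneg _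
  calc (⨍ x in ball z r, U x ∂μ) ^ p ≤ (r * ⨍ x in ball z r, ‖fderiv ℝ U x‖ ∂μ) ^ p :=
        Real.rpow_le_rpow (integral_nonneg hU0) poincare (zero_le_one.trans hp)
    _ = r ^ p * (⨍ x in ball z r, ‖fderiv ℝ U x‖ ∂μ) ^ p := Real.mul_rpow hr.le hDU_nonneg
    _ ≤ r ^ p * ⨍ x in ball z r, ‖fderiv ℝ U x‖ ^ p ∂μ := by
        gcongr
        refine rpow_setAverage_le_setAverage_rpow hp hμ0 hμ (fun _ => norm_nonneg _) ?_
          (integrableOn (zero_le_one.trans hp))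
        simpa only [Real.rpow_one] using integrableOn zero_le_one

lemma mul_measureReal_div_rpow_le_setAverage_norm_fderiv_rpow [Nontrivial E] {U : E → ℝ}
    {K : NNReal} (hU : LipschitzWith K U) (hU0 : 0 ≤ U) {z : E} {r : ℝ} (hr : 0 < r)
    (hs : Function.support U ⊆ ball z r) {p t : ℝ} (hp : 1 ≤ p) (ht : 0 ≤ t) :
    (t * μ.real {x | t ≤ U x} / μ.real (ball z r)) ^ p ≤
      r ^ p * ⨍ x in ball z r, ‖fderiv ℝ U x‖ ^ p ∂μ := by
  have hc : HasCompactSupport U := HasCompactSupport.of_support_subset_isCompact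
    (isCompact_closedBall z r) (hs.trans ball_subset_closedBall)
  have chebyshev : t * μ.real {x | t ≤ U x} ≤ ∫ x, U x ∂μ :=
    mul_meas_ge_le_integral_of_nonneg (ae_of_all _ hU0)
      (hU.continuous.integrable_of_hasCompactSupport hc) t
  rw [← setIntegral_eq_integral_of_forall_compl_eq_zero (s := ball z r)
    (fun x hx => Function.notMem_support.1 fun h => hx (hs h)),
    ← measure_smul_setAverage U measure_ball_lt_top.ne, smul_eq_mul] at chebyshev
  refine (Real.rpow_le_rpow (by positivity) (div_le_of_le_mul₀ measureReal_nonneg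
    (integral_nonneg hU0) (chebyshev.trans_eq (mul_comm _ _))) (zero_le_one.trans hp)).trans
    (setAverage_rpow_le_mul_setAverage_norm_fderiv_rpow μ hU hU0 hr hs hp)

end HaarMeasure

section HardyTestFun

variable {E : Type*} [NormedAddCommGroup E]

/-- The test function `(3 / 4 - w)₊` for the pointwise Hardy inequality, cut off so that it is
unchanged in the ball of radius `3 / 8` and vanishes outside the one of radius `1 / 2`. -/
def hardyTestFun (w : E → ℝ) (x : E) : ℝ := max (min (3 - 6 * ‖x‖) (3 / 4 - w x)) 0

lemma exists_lipschitzWith_hardyTestFun {w : E → ℝ} (hw : ∃ K, LipschitzWith K w) :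
    ∃ K, LipschitzWith K (hardyTestFun w) := by
  obtain ⟨K, hw⟩ := hw
  have hcone : LipschitzWith 6 fun x : E => 3 - 6 * ‖x‖ := .of_dist_le_mul fun x y => by
    rw [dist_sub_left, dist_eq_norm (6 * ‖x‖), ← mul_sub, norm_mul, dist_eq_norm]
    simpa using abs_norm_sub_norm_le x y
  exact ⟨_, (hcone.min ((LipschitzWith.const (3 / 4)).sub hw)).max_const 0⟩

lemma tsupport_hardyTestFun_subset {w : E → ℝ} (hw : Continuous w) :
    tsupport (hardyTestFun w) ⊆ {x ∈ closedBall 0 (1 / 2) | w x ≤ 3 / 4} := by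
  refine closure_minimal (fun x hx => ?_)
    (isClosed_closedBall.inter (isClosed_le hw continuous_const))
  have hpos : 0 < min (3 - 6 * ‖x‖) (3 / 4 - w x) := by
    by_contra! h
    exact hx (max_eq_right h)
  obtain ⟨hx1, hx2⟩ := lt_min_iff.1 hpos
  exact ⟨mem_closedBall_zero_iff.2 (by linarith), by linarith⟩

lemma eqOn_hardyTestFun {w : E → ℝ} (hw : 0 ≤ w) :
    EqOn (hardyTestFun w) (fun x => max (3 / 4 - w x) 0) (ball 0 (3 / 8)) := fun x hx => by
  have hx' := mem_ball_zero_iff.1 hx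
  have hwx : 0 ≤ w x := hw x
  rw [hardyTestFun, min_eq_right (by linarith)]

lemma norm_fderiv_hardyTestFun_le [NormedSpace ℝ E] {w : E → ℝ} (hw : 0 ≤ w) {x : E}
    (hx : x ∈ ball 0 (3 / 8)) (hwx : DifferentiableAt ℝ w x) :
    ‖fderiv ℝ (hardyTestFun w) x‖ ≤ ‖fderiv ℝ w x‖ := by
  have hg : LipschitzWith 1 fun s : ℝ => max (3 / 4 - s) 0 := by
    simpa using ((LipschitzWith.const (3 / 4 : ℝ)).sub LipschitzWith.id).max_const 0
  rw [((eqOn_hardyTestFun hw).eventuallyEq_of_mem (isOpen_ball.mem_nhds hx)).fderiv_eq]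
  simpa only [NNReal.coe_one, one_mul, Function.comp_def] using norm_fderiv_comp_le hg hwx

end HardyTestFun

section PointwiseHardy

variable {n : ℕ}

lemma exists_lt_setAverage_of_lt_maxOp {R t : ℝ} {f : En n → ℝ} {x : En n} (ht : 0 ≤ t)
    (h : t < maxOp R f x) : ∃ s ∈ Ioo 0 R, t < ⨍ y in ball x s, |f y| := by
  rcases isEmpty_or_nonempty (Ioo (0 : ℝ) R) with hR | hR
  · rw [maxOp, Real.iSup_of_isEmpty] at h
    exact absurd h ht.not_gt
  · obtain ⟨s, hs⟩ := exists_lt_of_lt_ciSup h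
    exact ⟨s, s.2, hs⟩

lemma comp_inv_smul_sub_mem_Lip0 {Ω : Set (En n)} {z : En n} {r : ℝ} (hr : r ≠ 0) {v : En n → ℝ}
    (hv : v ∈ Lip0 ((fun x => z + r • x) ⁻¹' Ω)) : (fun y => v (r⁻¹ • (y - z))) ∈ Lip0 Ω := by
  obtain ⟨⟨K, hK⟩, hc, hΩ⟩ := hv
  let e : En n ≃ₜ En n :=
    (Homeomorph.subRight z).trans (Homeomorph.smulOfNeZero r⁻¹ (inv_ne_zero hr))
  refine ⟨⟨_, hK.comp ((lipschitzWith_smul r⁻¹).comp (LipschitzWith.id.sub (.const z)))⟩,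
    hc.comp_homeomorph e, fun y hy => ?_⟩
  have hy' : r⁻¹ • (y - z) ∈ tsupport v := tsupport_comp_subset_preimage v e.continuous hy
  simpa only [mem_preimage, smul_inv_smul₀ hr, add_sub_cancel] using hΩ hy'

lemma hardyTestFun_mem_Lip0 {Ω : Set (En n)} {z : En n} {r : ℝ} {w : En n → ℝ}
    (hw : ∃ K, LipschitzWith K w) (hw1 : ∀ x ∈ shiftedSet Ωᶜ z r, 1 ≤ w x) :
    hardyTestFun w ∈ Lip0 ((fun x => z + r • x) ⁻¹' Ω) := by
  have hsub := tsupport_hardyTestFun_subset hw.choose_spec.continuous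
  refine ⟨exists_lipschitzWith_hardyTestFun hw, (isCompact_closedBall 0 (1 / 2)).of_isClosed_subset
    (isClosed_tsupport _) fun x hx => (hsub hx).1, fun x hx => ?_⟩
  by_contra hxΩ
  have h1 := hw1 x ⟨(hsub hx).1, hxΩ⟩
  linarith [(hsub hx).2]

lemma infDist_frontier_le_mul_norm {Ω : Set (En n)} {z x : En n} {r : ℝ} (hr : 0 ≤ r)
    (hz : z ∉ Ω) (hx : z + r • x ∈ Ω) : infDist (z + r • x) (frontier Ω) ≤ r * ‖x‖ := by
  obtain ⟨y, hy, hxy⟩ := exists_mem_frontier_dist_le hx hz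
  refine (infDist_le_dist_of_mem hy).trans (hxy.trans_eq ?_)
  rw [dist_self_add_left, norm_smul, Real.norm_of_nonneg hr]

lemma setAverage_abs_rescale (v : En n → ℝ) {z x : En n} {d p r s : ℝ} (hr : 0 < r) (hd : 0 ≤ d) :
    ⨍ y in ball (z + r • x) s, |(d * gnorm (fun y => v (r⁻¹ • (y - z))) y) ^ p| =
      (d / r) ^ p * ⨍ y in ball x (s / r), gnorm v y ^ p := by
  have gnorm_rescale : ∀ y, |(d * gnorm (fun y => v (r⁻¹ • (y - z))) y) ^ p| =
      (d / r) ^ p * gnorm v (r⁻¹ • (y - z)) ^ p := fun y => by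
    rw [gnorm, norm_fderiv_comp_smul_sub, abs_of_nonneg (by positivity), ← mul_assoc,
      abs_of_nonneg (by positivity), ← div_eq_mul_inv,
      Real.mul_rpow (by positivity) (norm_nonneg _), gnorm]
  simp only [gnorm_rescale]
  rw [setAverage_ball_comp_inv_smul_sub volume (fun y => (d / r) ^ p * gnorm v y ^ p) z x hr,
    average, integral_const_mul, ← average]

lemma rpow_le_of_doublePhase_le {p q c m s M : ℝ} (hp : 0 < p) (hpq : p ≤ q) (hm : 0 ≤ m)
    (hs : 0 ≤ s) (hM : 0 ≤ M)
    (h : s ^ p + m * s ^ q ≤ c * (1 + m * M ^ ((q - p) / p)) * M) : s ^ p ≤ max c 1 * M := by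
  rcases le_total (s ^ p) M with hsM | hMs
  · exact hsM.trans (le_mul_of_one_le_left hM (le_max_right c 1))
  · have hMq : M ^ ((q - p) / p) * s ^ p ≤ s ^ q := by
      calc M ^ ((q - p) / p) * s ^ p ≤ (s ^ p) ^ ((q - p) / p) * s ^ p := by
            gcongr
        _ = s ^ q := by
            rw [← Real.rpow_mul hs, mul_div_cancel₀ _ hp.ne',
              ← Real.rpow_add_of_nonneg hs (sub_nonneg.2 hpq) hp.le, sub_add_cancel]
    have hb : 0 < 1 + m * M ^ ((q - p) / p) := by positivity
    refine le_of_mul_le_mul_left ?_ hb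
    calc (1 + m * M ^ ((q - p) / p)) * s ^ p = s ^ p + m * (M ^ ((q - p) / p) * s ^ p) := by ring
      _ ≤ s ^ p + m * s ^ q := by gcongr
      _ ≤ c * (1 + m * M ^ ((q - p) / p)) * M := h
      _ = (1 + m * M ^ ((q - p) / p)) * (c * M) := by ring
      _ ≤ (1 + m * M ^ ((q - p) / p)) * (max c 1 * M) := by
          gcongr
          exact le_max_left c 1

/-- The pointwise `p`-Hardy inequality with constant `c` at the points of `Ω` whose distance to
the boundary is less than `ro`. -/
def PointwiseHardy (Ω : Set (En n)) (p c ro : ℝ) : Prop :=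
  ∀ x ∈ Ω, infDist x (frontier Ω) < ro → ∀ u ∈ Lip0 Ω,
    |u x| ^ p ≤ c * maxOp (2 * infDist x (frontier Ω))
      (fun y => (infDist x (frontier Ω) * gnorm u y) ^ p) x

namespace PointwiseHardy

variable {Ω : Set (En n)} {p c ro : ℝ}

lemma of_doublePhase {q : ℝ} (hp : 0 < p) (hpq : p ≤ q)
    (H : ∀ z ∈ Ω, infDist z (frontier Ω) < ro → ∀ u ∈ Lip0 Ω, ∃ m, 0 ≤ m ∧
      |u z| ^ p + m * |u z| ^ q ≤
        c * (1 + m * (maxOp (2 * infDist z (frontier Ω))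
              (fun x => (infDist z (frontier Ω) * gnorm u x) ^ p) z) ^ ((q - p) / p)) *
          maxOp (2 * infDist z (frontier Ω))
            (fun x => (infDist z (frontier Ω) * gnorm u x) ^ p) z) :
    PointwiseHardy Ω p (max c 1) ro := fun z hz hzr u hu => by
  obtain ⟨m, hm, h⟩ := H z hz hzr u hu
  exact rpow_le_of_doublePhase_le hp hpq hm (abs_nonneg _)
    (Real.iSup_nonneg fun s => integral_nonneg fun y => abs_nonneg _) h

lemma exists_rpow_lt_setAverage (H : PointwiseHardy Ω p c ro) (hp : 0 ≤ p) (hc : 0 < c)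
    {z : En n} (hz : z ∉ Ω) {r : ℝ} (hr : 0 < r) (hrro : r < ro) {v : En n → ℝ}
    (hv : v ∈ Lip0 ((fun x => z + r • x) ⁻¹' Ω)) {x : En n} (hx : x ∈ ball 0 (1 / 8))
    (hxΩ : z + r • x ∈ Ω) (hvx : v x ≠ 0) :
    ∃ s ∈ Ioc (0 : ℝ) 1, ball x s ⊆ ball 0 (3 / 8) ∧
      |v x| ^ p < 2 * c * ⨍ y in ball x s, gnorm v y ^ p := by
  rw [mem_ball_zero_iff] at hx
  set d := infDist (z + r • x) (frontier Ω) with hd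
  have hd0 : 0 ≤ d := infDist_nonneg
  have hdr : d < r / 8 := (infDist_frontier_le_mul_norm hr.le hz hxΩ).trans_lt (by nlinarith)
  have hvp : 0 < |v x| ^ p := Real.rpow_pos_of_pos (abs_pos.2 hvx) p
  have hardy := H _ hxΩ (by linarith) _ (comp_inv_smul_sub_mem_Lip0 hr.ne' hv)
  rw [add_sub_cancel_left, inv_smul_smul₀ hr.ne', ← hd] at hardy
  obtain ⟨s, hs, hlt⟩ := exists_lt_setAverage_of_lt_maxOp (t := |v x| ^ p / (2 * c))
    (by positivity) (by rw [div_lt_iff₀' (by positivity)]; linarith)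
  rw [setAverage_abs_rescale v hr hd0, div_lt_iff₀' (by positivity)] at hlt
  have hsr : s / r < 1 / 4 := by
    rw [div_lt_iff₀ hr]
    linarith [hs.2]
  refine ⟨s / r, ⟨div_pos hs.1 hr, by linarith⟩,
    ball_subset_ball' (by rw [dist_zero_right]; linarith), hlt.trans_le ?_⟩
  gcongr
  refine mul_le_of_le_one_left (integral_nonneg fun y => Real.rpow_nonneg (norm_nonneg _) _) ?_
  refine Real.rpow_le_one (by positivity) ?_ hp
  rw [div_le_one hr]
  linarith

lemma exists_lt_setAverage_gnorm_rpow (H : PointwiseHardy Ω p c ro) (hp : 0 ≤ p) (hc : 0 < c)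
    {z : En n} (hz : z ∉ Ω) {r : ℝ} (hr : 0 < r) (hrro : r < ro) {w : En n → ℝ}
    (hw : ∃ K, LipschitzWith K w) (hw0 : 0 ≤ w) (hw1 : ∀ x ∈ shiftedSet Ωᶜ z r, 1 ≤ w x)
    (hint : Integrable fun x => gnorm w x ^ p) {x : En n} (hx : x ∈ ball 0 (1 / 8))
    (hwx : w x < 1 / 2) :
    ∃ s ∈ Ioc (0 : ℝ) 1, (1 / 4) ^ p / (2 * c) < ⨍ y in ball x s, gnorm w y ^ p := by
  have hx' := mem_ball_zero_iff.1 hx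
  have hxΩ : z + r • x ∈ Ω := by
    by_contra h
    linarith [hw1 x ⟨mem_closedBall_zero_iff.2 (by linarith), h⟩]
  have hvx : 1 / 4 ≤ hardyTestFun w x := by
    rw [eqOn_hardyTestFun hw0 (mem_ball_zero_iff.2 (by linarith))]
    exact le_max_of_le_left (by linarith)
  obtain ⟨s, hs, hsub, hlt⟩ := H.exists_rpow_lt_setAverage hp hc hz hr hrro
    (hardyTestFun_mem_Lip0 hw hw1) hx hxΩ (by linarith)
  refine ⟨s, hs, (div_lt_iff₀' (by positivity)).2 ?_⟩
  calc (1 / 4 : ℝ) ^ p ≤ |hardyTestFun w x| ^ p := by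
        gcongr
        exact hvx.trans (le_abs_self _)
    _ < 2 * c * ⨍ y in ball x s, gnorm (hardyTestFun w) y ^ p := hlt
    _ ≤ 2 * c * ⨍ y in ball x s, gnorm w y ^ p := by
        rw [setAverage_eq, setAverage_eq]
        gcongr ?_ * (_ • ?_)
        refine integral_mono_of_nonneg (ae_of_all _ fun y => Real.rpow_nonneg (norm_nonneg _) _)
          hint.integrableOn ?_
        filter_upwards [ae_restrict_of_ae hw.choose_spec.ae_differentiableAt,
          ae_restrict_mem measurableSet_ball] with y hwy hy
        exact Real.rpow_le_rpow (norm_nonneg _)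
          (norm_fderiv_hardyTestFun_le hw0 (hsub hy) hwy) hp

lemma volume_real_ball_inter_lt_half_le (H : PointwiseHardy Ω p c ro) (hp : 0 ≤ p) (hc : 0 < c)
    {z : En n} (hz : z ∉ Ω) {r : ℝ} (hr : 0 < r) (hrro : r < ro) {w : En n → ℝ}
    (hw : ∃ K, LipschitzWith K w) (hw0 : 0 ≤ w) (hw1 : ∀ x ∈ shiftedSet Ωᶜ z r, 1 ≤ w x)
    (hint : Integrable fun x => gnorm w x ^ p) :
    volume.real (ball 0 (1 / 8) ∩ {x | w x < 1 / 2}) ≤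
      2 * c * 4 ^ p * 5 ^ n * ∫ x, gnorm w x ^ p := by
  have weak_type := mul_measureReal_le_integral_of_lt_setAverage volume
    (f := fun x => gnorm w x ^ p) (fun x => Real.rpow_nonneg (norm_nonneg _) _) hint
    (by positivity) fun x (hx : x ∈ ball 0 (1 / 8) ∩ {x | w x < 1 / 2}) =>
      H.exists_lt_setAverage_gnorm_rpow hp hc hz hr hrro hw hw0 hw1 hint hx.1 hx.2
  rw [finrank_euclideanSpace_fin, Real.div_rpow zero_le_one (by norm_num), Real.one_rpow,
    div_div, one_div_mul_eq_div, div_le_iff₀' (by positivity)] at weak_type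
  exact weak_type.trans_eq (by ring)

end PointwiseHardy
end PointwiseHardy

lemma half_measureReal_le_or_of_subset_union {X : Type*} [MeasurableSpace X] {μ : Measure X}
    {A B C : Set X} (h : A ⊆ B ∪ C) (hB : μ B ≠ ⊤) (hC : μ C ≠ ⊤) :
    μ.real A / 2 ≤ μ.real B ∨ μ.real A / 2 ≤ μ.real C := by
  by_contra! hlt
  linarith [(measureReal_mono h (measure_union_ne_top hB hC)).trans (measureReal_union_le B C)]

section Capacity

variable {n : ℕ}

lemma exists_lipschitzWith_nonneg_of_mem_Adm {E O : Set (En n)} (hO : IsOpen O) (hEO : E ⊆ O)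
    {u : En n → ℝ} (hu : u ∈ Adm E O 1) :
    ∃ w : En n → ℝ, (∃ K, LipschitzWith K w) ∧ 0 ≤ w ∧ Function.support w ⊆ O ∧
      (∀ x ∈ E, 1 ≤ w x) ∧ ∀ᵐ x ∂volume.restrict O, gnorm w x ≤ gnorm u x := by
  obtain ⟨⟨K, hK⟩, hE, h0⟩ := hu
  have hpos : LipschitzWith 1 fun s : ℝ => max s 0 := LipschitzWith.id.max_const 0
  refine ⟨O.indicator fun x => max (u x) 0, ⟨_, lipschitzWith_indicator_of_frontier
    (hpos.comp_lipschitzOnWith hK) fun x hx => ?_⟩, indicator_nonneg fun x _ => le_max_right _ _,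
    support_indicator_subset, fun x hx => ?_, ?_⟩
  · rw [h0 x hx, max_self]
  · rw [indicator_of_mem (hEO hx)]
    exact le_max_of_le_left (hE x hx)
  · filter_upwards [(hK.mono subset_closure).ae_differentiableWithinAt hO.measurableSet,
      ae_restrict_mem hO.measurableSet] with x hx hxO
    have hOx : O ∈ nhds x := hO.mem_nhds hxO
    rw [gnorm, gnorm, (eqOn_indicator.eventuallyEq_of_mem hOx).fderiv_eq]
    simpa only [NNReal.coe_one, one_mul, Function.comp_def] using
      norm_fderiv_comp_le hpos (hx.differentiableAt hOx)

lemma Adm_ball_nonempty {E : Set (En n)} (hE : E ⊆ closedBall 0 (1 / 2)) {t : ℝ} (ht : 0 ≤ t) :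
    (Adm E (ball 0 1) t).Nonempty := by
  refine ⟨fun x => 2 * t * (1 - ‖x‖), ⟨_, ((lipschitzWith_smul (2 * t)).comp
    ((LipschitzWith.const 1).sub lipschitzWith_one_norm)).lipschitzOnWith⟩,
    fun x hx => ?_, fun x hx => ?_⟩
  · nlinarith [mem_closedBall_zero_iff.1 (hE hx)]
  · rw [frontier_ball _ one_ne_zero, mem_sphere_zero_iff_norm] at hx
    simp only [hx, sub_self, mul_zero]

lemma volume_real_unitBall_pos : 0 < volume.real (ball (0 : En n) 1) :=
  ENNReal.toReal_pos (measure_ball_pos _ _ one_pos).ne' measure_ball_lt_top.ne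

end Capacity

/-- The `p`-fatness constant obtained from the pointwise `p`-Hardy inequality with constant `c`:
the terms of the minimum bound the energy of a test function `w` when `{w < 1 / 2}`, respectively
`{1 / 2 ≤ w}`, has at least half the measure of the ball of radius `1 / 8`. -/
def pFatConst (n : ℕ) (p c : ℝ) : ℝ :=
  volume.real (ball (0 : En n) 1) *
    min ((1 / 8) ^ n / 2 / (2 * c * 4 ^ p * 5 ^ n)) ((1 / 2 * ((1 / 8) ^ n / 2)) ^ p)

lemma pFatConst_pos {n : ℕ} {p c : ℝ} (hc : 0 < c) : 0 < pFatConst n p c :=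
  mul_pos volume_real_unitBall_pos (by positivity)

namespace PointwiseHardy

variable {n : ℕ} {Ω : Set (En n)} {p c ro : ℝ}

lemma pFatConst_le_integral (H : PointwiseHardy Ω p c ro) (hn : 0 < n) (hp : 1 ≤ p) (hc : 0 < c)
    {z : En n} (hz : z ∉ Ω) {r : ℝ} (hr : 0 < r) (hrro : r < ro) {w : En n → ℝ}
    (hw : ∃ K, LipschitzWith K w) (hw0 : 0 ≤ w) (hws : Function.support w ⊆ ball 0 1)
    (hw1 : ∀ x ∈ shiftedSet Ωᶜ z r, 1 ≤ w x) :
    pFatConst n p c ≤ ∫ x in ball 0 1, gnorm w x ^ p := by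
  have : Nonempty (Fin n) := ⟨⟨0, hn⟩⟩
  have hp0 : 0 < p := one_pos.trans_le hp
  obtain ⟨K, hK⟩ := hw
  set ω := volume.real (ball (0 : En n) 1) with hω
  have hω0 : 0 < ω := volume_real_unitBall_pos
  have hsuper := mul_measureReal_div_rpow_le_setAverage_norm_fderiv_rpow volume hK hw0 one_pos hws
    hp (one_half_pos (α := ℝ)).le
  have hsub := H.volume_real_ball_inter_lt_half_le hp0.le hc hz hr hrro ⟨K, hK⟩ hw0 hw1
    (integrable_norm_fderiv_rpow hK (HasCompactSupport.of_support_subset_isCompact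
      (isCompact_closedBall 0 1) (hws.trans ball_subset_closedBall)) hp0)
  rw [← setIntegral_eq_integral_of_forall_compl_eq_zero (s := ball 0 1) fun x hx => by
    rw [gnorm, fderiv_eq_zero_of_nonneg hw0 (Function.notMem_support.1 fun h => hx (hws h)),
      norm_zero, Real.zero_rpow hp0.ne']] at hsub
  rw [← hω, Real.one_rpow, one_mul, setAverage_eq, smul_eq_mul, ← hω, ← div_eq_inv_mul,
    le_div_iff₀' hω0] at hsuper
  have hball : volume.real (ball (0 : En n) (1 / 8)) = (1 / 8) ^ n * ω := by
    rw [measureReal_def, Measure.addHaar_ball volume 0 (by norm_num), finrank_euclideanSpace_fin,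
      ENNReal.toReal_mul, ENNReal.toReal_ofReal (by positivity), hω, measureReal_def]
  have hcover : ball (0 : En n) (1 / 8) ⊆ ball 0 (1 / 8) ∩ {x | w x < 1 / 2} ∪ {x | 1 / 2 ≤ w x} :=
    fun x hx => (lt_or_ge (w x) (1 / 2)).imp (fun h => ⟨hx, h⟩) id
  have hfin : volume {x | 1 / 2 ≤ w x} ≠ ⊤ := ((measure_mono fun x (hx : 1 / 2 ≤ w x) =>
    hws (show w x ≠ 0 by linarith)).trans_lt measure_ball_lt_top).ne
  rcases half_measureReal_le_or_of_subset_union hcover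
    (measure_inter_lt_top_of_left_ne_top measure_ball_lt_top.ne).ne hfin with h | h <;>
    rw [hball] at h
  · refine (mul_le_mul_of_nonneg_left (min_le_left _ _) hω0.le).trans ?_
    rw [mul_div_assoc', div_le_iff₀' (by positivity)]
    linarith
  · refine (mul_le_mul_of_nonneg_left ((min_le_right _ _).trans ?_) hω0.le).trans hsuper
    gcongr
    rw [le_div_iff₀ hω0]
    linarith

lemma locUnifPFat (H : PointwiseHardy Ω p c ro) (hn : 0 < n) (hp : 1 ≤ p) (hc : 0 < c) :
    LocUnifPFat p Ωᶜ (pFatConst n p c) ro := fun z hz r hr hrro => by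
  refine le_csInf ((Adm_ball_nonempty (fun x hx => hx.1) zero_le_one).image _) ?_
  rintro _ ⟨u, hu, rfl⟩
  obtain ⟨w, hw, hw0, hws, hw1, hwu⟩ := exists_lipschitzWith_nonneg_of_mem_Adm isOpen_ball
    (fun x hx => closedBall_subset_ball (by norm_num) hx.1) hu
  have hp0 : 0 ≤ p := zero_le_one.trans hp
  refine (H.pFatConst_le_integral hn hp hc hz hr hrro hw hw0 hws hw1).trans
    (integral_mono_of_nonneg (ae_of_all _ fun x => Real.rpow_nonneg (norm_nonneg _) p)
      (integrableOn_norm_fderiv_rpow (hu.1.choose_spec.mono subset_closure) isOpen_ball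
        measure_ball_lt_top.ne hp0) ?_)
  filter_upwards [hwu] with x hx
  exact Real.rpow_le_rpow (norm_nonneg _) hx hp0

end PointwiseHardy

lemma integrableOn_comp_add_smul {E F : Type*} [NormedAddCommGroup E] [NormedSpace ℝ E]
    [MeasurableSpace E] [BorelSpace E] [FiniteDimensional ℝ E] [NormedAddCommGroup F]
    {μ : Measure E} [μ.IsAddHaarMeasure] {f : E → F} (hf : LocallyIntegrable f μ) (z : E) {r : ℝ}
    (hr : r ≠ 0) {s : Set E} (hs : IsCompact s) : IntegrableOn (fun x => f (z + r • x)) s μ := by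
  have hcont : Continuous fun x : E => z + r • x := by fun_prop
  have hT : IsCompact ((fun x => z + r • x) '' s) := hs.image hcont
  have hind := (((integrable_indicator_iff hT.measurableSet).2
    (hf.integrableOn_isCompact hT)).comp_add_left z).comp_smul hr
  exact ((integrable_indicator_iff (hcont.measurable hT.measurableSet)).1 hind).mono_set
    (subset_preimage_image _ s)

lemma holderWith_of_dist_le {X Y : Type*} [PseudoMetricSpace X] [PseudoMetricSpace Y]
    {f : X → Y} {A α : ℝ} (hA : 0 ≤ A) (hα : 0 ≤ α)
    (h : ∀ x y, dist (f x) (f y) ≤ A * dist x y ^ α) : HolderWith A.toNNReal α.toNNReal f := by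
  intro x y
  rw [edist_dist, edist_dist, Real.coe_toNNReal α hα, ENNReal.ofReal_rpow_of_nonneg dist_nonneg hα,
    ← ENNReal.ofReal, ← ENNReal.ofReal_mul hA]
  exact ENNReal.ofReal_le_ofReal (h x y)

section DoublePhase

variable {n : ℕ}

lemma aInfOn_nonneg {a : En n → ℝ} (ha : 0 ≤ a) (O : Set (En n)) : 0 ≤ aInfOn a O :=
  Real.sInf_nonneg fun _ ⟨x, _, hx⟩ => hx ▸ ha x

lemma aInfOn_le {a : En n → ℝ} (ha : 0 ≤ a) {O : Set (En n)} {x : En n} (hx : x ∈ O) :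
    aInfOn a O ≤ a x :=
  csInf_le ⟨0, fun _ ⟨y, _, hy⟩ => hy ▸ ha y⟩ (mem_image_of_mem a hx)

lemma le_setIntegral_phi_div_phiMinus {a : En n → ℝ} (ha : 0 ≤ a) {O : Set (En n)} (hO : IsOpen O)
    (hO' : volume O ≠ ⊤) (haO : IntegrableOn a O) {p q : ℝ} (hp : 0 ≤ p) (hq : 0 ≤ q)
    {u : En n → ℝ} {K : NNReal} (hu : LipschitzOnWith K u O) {t : ℝ} (ht : 0 < t) {κ : ℝ}
    (hκp : κ ≤ ∫ x in O, (gnorm u x / t) ^ p) (hκq : κ ≤ ∫ x in O, (gnorm u x / t) ^ q) :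
    κ ≤ ∫ x in O, phi a p q x (gnorm u x) / phiMinus a p q O t := by
  have hm : 0 ≤ aInfOn a O := aInfOn_nonneg ha O
  have hgp : IntegrableOn (fun x => gnorm u x ^ p) O := integrableOn_norm_fderiv_rpow hu hO hO' hp
  have hgq : IntegrableOn (fun x => gnorm u x ^ q) O := integrableOn_norm_fderiv_rpow hu hO hO' hq
  have hphi : IntegrableOn (fun x => phi a p q x (gnorm u x)) O := by
    refine hgp.add (haO.mul_bdd (c := K ^ q) hgq.aestronglyMeasurable ?_)
    filter_upwards [ae_restrict_mem hO.measurableSet] with x hx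
    rw [gnorm, Real.norm_of_nonneg (Real.rpow_nonneg (norm_nonneg _) q)]
    exact Real.rpow_le_rpow (norm_nonneg _)
      (norm_fderiv_le_of_lipschitzOn ℝ (hO.mem_nhds hx) hu) hq
  have hlow : (∫ x in O, gnorm u x ^ p) + aInfOn a O * ∫ x in O, gnorm u x ^ q ≤
      ∫ x in O, phi a p q x (gnorm u x) := by
    rw [← integral_const_mul, ← integral_add hgp (hgq.const_mul _)]
    refine setIntegral_mono_on (hgp.add (hgq.const_mul _)) hphi hO.measurableSet fun x hx => ?_
    exact add_le_add_right (mul_le_mul_of_nonneg_right (aInfOn_le ha hx)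
      (Real.rpow_nonneg (norm_nonneg _) q)) _
  simp only [Real.div_rpow (norm_nonneg _) ht.le, gnorm, integral_div] at hκp hκq
  rw [le_div_iff₀ (by positivity)] at hκp hκq
  rw [integral_div, le_div_iff₀ (by rw [phiMinus]; positivity)]
  calc κ * phiMinus a p q O t = κ * t ^ p + aInfOn a O * (κ * t ^ q) := by rw [phiMinus]; ring
    _ ≤ (∫ x in O, gnorm u x ^ p) + aInfOn a O * ∫ x in O, gnorm u x ^ q :=
        add_le_add hκp (mul_le_mul_of_nonneg_left hκq hm)
    _ ≤ ∫ x in O, phi a p q x (gnorm u x) := hlow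

lemma capP_le_setIntegral {E O : Set (En n)} {u : En n → ℝ} {t : ℝ} (ht : 0 < t)
    (hu : u ∈ Adm E O t) (p : ℝ) : capP p E O ≤ ∫ x in O, (gnorm u x / t) ^ p := by
  obtain ⟨⟨K, hK⟩, hE, h0⟩ := hu
  have hmem : t⁻¹ • u ∈ Adm E O 1 :=
    ⟨⟨_, (lipschitzWith_smul t⁻¹).comp_lipschitzOnWith hK⟩,
      fun x hx => (le_inv_mul_iff₀ ht).2 ((mul_one t).trans_le (hE x hx)),
      fun x hx => by rw [Pi.smul_apply, h0 x hx, smul_zero]⟩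
  have hgnorm : ∀ x, gnorm (t⁻¹ • u) x = gnorm u x / t := fun x => by
    rw [gnorm, fderiv_const_smul_field, Pi.smul_apply, norm_smul, norm_inv,
      Real.norm_of_nonneg ht.le, gnorm, div_eq_inv_mul]
  simp only [← hgnorm]
  refine csInf_le ⟨0, ?_⟩ (mem_image_of_mem _ hmem)
  rintro _ ⟨v, -, rfl⟩
  exact integral_nonneg fun x => Real.rpow_nonneg (norm_nonneg _) p

end DoublePhase

/-- The infimal `φ`-fatness constant of a set which is `p`-fat with constant `κ`. The second term
of the minimum is the bound for the `q`-energy that Jensen's inequality yields. -/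
def phiFatConst (n : ℕ) (p q κ : ℝ) : ℝ :=
  min κ (volume.real (ball (0 : En n) 1) * (κ / volume.real (ball (0 : En n) 1)) ^ (q / p))

lemma phiFatConst_pos {n : ℕ} {p q κ : ℝ} (hκ : 0 < κ) : 0 < phiFatConst n p q κ := by
  have hω : 0 < volume.real (ball (0 : En n) 1) := volume_real_unitBall_pos
  exact lt_min hκ (by positivity)

lemma phiFatConst_le_setIntegral_rpow {n : ℕ} {p q κ : ℝ} (hp : 0 < p) (hpq : p ≤ q) (hκ : 0 ≤ κ)
    {f : En n → ℝ} (hf : 0 ≤ f) (hfp : IntegrableOn (fun x => f x ^ p) (ball 0 1))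
    (hfq : IntegrableOn (fun x => f x ^ q) (ball 0 1)) (h : κ ≤ ∫ x in ball 0 1, f x ^ p) :
    phiFatConst n p q κ ≤ ∫ x in ball 0 1, f x ^ q := by
  have hω : 0 < volume.real (ball (0 : En n) 1) := volume_real_unitBall_pos
  have rpow_q : ∀ x, (f x ^ p) ^ (q / p) = f x ^ q := fun x => by
    rw [← Real.rpow_mul (hf x), mul_div_cancel₀ _ hp.ne']
  have jensen := rpow_setAverage_le_setAverage_rpow ((one_le_div hp).2 hpq)
    (measure_ball_pos volume 0 one_pos).ne' measure_ball_lt_top.ne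
    (fun x => Real.rpow_nonneg (hf x) p) hfp (by simpa only [rpow_q] using hfq)
  simp only [rpow_q, setAverage_eq, smul_eq_mul, ← div_eq_inv_mul] at jensen
  rw [le_div_iff₀' hω] at jensen
  refine ((min_le_right _ _).trans ?_).trans jensen
  have : 0 ≤ q / p := div_nonneg (hp.le.trans hpq) hp.le
  gcongr

lemma LocUnifPFat.locUnifPhiFat {n : ℕ} {a : En n → ℝ} {p q κ ro : ℝ} {E : Set (En n)}
    (hE : LocUnifPFat p E κ ro) (hp : 0 < p) (hpq : p ≤ q) (hκ : 0 ≤ κ) (ha : 0 ≤ a)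
    (ha' : LocallyIntegrable a) : LocUnifPhiFat a p q E (phiFatConst n p q κ) ro :=
  fun z hz r hr hrro => by
  have : Nonempty (Ioi (0 : ℝ)) := nonempty_Ioi_subtype
  refine le_ciInf fun ⟨t, (ht : 0 < t)⟩ =>
    le_csInf ((Adm_ball_nonempty (fun x hx => hx.1) ht.le).image _) ?_
  rintro _ ⟨u, hu, rfl⟩
  obtain ⟨K, hK⟩ := hu.1
  have hK' : LipschitzOnWith K u (ball 0 1) := hK.mono subset_closure
  have hint : ∀ {e : ℝ}, 0 < e → IntegrableOn (fun x => (gnorm u x / t) ^ e) (ball 0 1) :=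
    fun he => by
      simp only [Real.div_rpow (norm_nonneg _) ht.le, gnorm]
      exact (integrableOn_norm_fderiv_rpow hK' isOpen_ball measure_ball_lt_top.ne he.le).div_const _
  have hcap : κ ≤ ∫ x in ball 0 1, (gnorm u x / t) ^ p :=
    (hE z hz r hr hrro).trans (capP_le_setIntegral ht hu p)
  have hq : 0 < q := hp.trans_le hpq
  exact le_setIntegral_phi_div_phiMinus (a := fun x => a (z + r • x)) (fun x => ha (z + r • x))
    isOpen_ball measure_ball_lt_top.ne
    ((integrableOn_comp_add_smul ha' z hr.ne' (isCompact_closedBall 0 1)).mono_set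
      ball_subset_closedBall) hp.le hq.le hK' ht ((min_le_left _ _).trans hcap)
    (phiFatConst_le_setIntegral_rpow hp hpq hκ (fun x => div_nonneg (norm_nonneg _) ht.le)
      (hint hp) (hint hq) hcap)

theorem fatness_of_pointwise_hardy_general (n : ℕ) (hn : 0 < n) (p q c0 : ℝ) (hp : 1 ≤ p)
    (hpq : p ≤ q) :
    ∃ cfat : ℝ, 0 < cfat ∧ ∀ (ro : ℝ) (a : En n → ℝ) (Ω : Set (En n)),
      0 ≤ a → LocallyIntegrable a →
      (∀ z ∈ Ω, infDist z (frontier Ω) < ro → ∀ u ∈ Lip0 Ω, ∃ m, 0 ≤ m ∧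
        |u z| ^ p + m * |u z| ^ q ≤
          c0 * (1 + m * (maxOp (2 * infDist z (frontier Ω))
                (fun x => (infDist z (frontier Ω) * gnorm u x) ^ p) z) ^ ((q - p) / p)) *
            maxOp (2 * infDist z (frontier Ω))
              (fun x => (infDist z (frontier Ω) * gnorm u x) ^ p) z) →
      LocUnifPhiFat a p q Ωᶜ cfat ro := by
  have hp0 : 0 < p := one_pos.trans_le hp
  have hc : 0 < max c0 1 := one_pos.trans_le (le_max_right c0 1)
  have hκ : 0 < pFatConst n p (max c0 1) := pFatConst_pos hc
  refine ⟨phiFatConst n p q (pFatConst n p (max c0 1)), phiFatConst_pos hκ, ?_⟩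
  intro ro a Ω ha ha' H
  exact ((PointwiseHardy.of_doublePhase hp0 hpq H).locUnifPFat hn hp hc).locUnifPhiFat
    hp0 hpq hκ.le ha ha'

/-- **From the pointwise Hardy inequality back to the capacity density condition**
(Theorem 1.9, (4) ⇒ (1), with the infimum coefficient `a^-_{y,R}`). -/
theorem fatness_of_pointwise_hardy
    (n : ℕ) (hn : 0 < n) (p q c0 : ℝ)
    (hp : 1 < p) (hpq : p < q) (hc0 : 0 < c0) :
    ∃ cfat : ℝ, 0 < cfat ∧
      ∀ (α A ro : ℝ) (a : En n → ℝ) (Ω : Set (En n)),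
        0 < α → α ≤ 1 → (∀ x, 0 ≤ a x) → 0 ≤ A →
        (∀ x y, |a x - a y| ≤ A * dist x y ^ α) →
        q / p ≤ 1 + α / n →
        IsOpen Ω → 0 < ro → ro ≤ 1 →
        (∀ z ∈ Ω, ∀ rz : ℝ, rz = infDist z (frontier Ω) → rz < ro →
          ∀ (y : En n) (R : ℝ), 0 < R → ∀ u ∈ Lip0 Ω,
            |u z| ^ p + aInfOn a (ball y R) * |u z| ^ q ≤
              c0 * (1 + aInfOn a (ball y R) *
                    (maxOp (2 * rz) (fun x => (rz * gnorm u x) ^ p) z) ^ ((q - p) / p)) *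
                maxOp (2 * rz) (fun x => (rz * gnorm u x) ^ p) z) →
        LocUnifPhiFat a p q Ωᶜ cfat ro := by
  obtain ⟨cfat, hcfat, general⟩ := fatness_of_pointwise_hardy_general n hn p q c0 hp.le hpq.le
  refine ⟨cfat, hcfat, fun α A ro a Ω hα _ ha hA hholder _ _ _ _ hardy => ?_⟩
  exact general ro a Ω ha ((holderWith_of_dist_le hA hα.le hholder).continuous
    (Real.toNNReal_pos.2 hα)).locallyIntegrable fun z hz hzro u hu =>
      ⟨aInfOn a (ball 0 1), aInfOn_nonneg ha _,
      hardy z hz _ rfl hzro 0 1 one_pos u hu⟩
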